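/- arXiv:2510.08370 — 5 statements merged into one kernel-verified Lean document; each statement's English description precedes it below -/
import Mathlib

section
/- Let X : ℝ² → ℝ² be positively homogeneous of degree zero (X(c·x) = X(x) for all real c > 0 and all x ≠ 0) and continuous on ℝ² ∖ {0}, and let m > 0 satisfy ‖X(x)‖ ≥ m for all x ≠ 0. Let T : ℝ² → ℝ² be a map such that (i) there is B ≥ 0 with ‖T(x) − x‖ ≤ B for all x ∈ ℝ², and (ii) there are constants C ≥ 0 and R > 0 with ‖T(x) − x − X(x)‖ ≤ C/‖x‖ whenever ‖x‖ ≥ R. Then for every positive integer k there exists ρ > 0 such that every k-periodic point z of T (i.e., every z with T^[k](z) = z) satisfies ‖z‖ ≤ ρ. -/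
open Function

/-!
Far from the origin `X` is almost constant at bounded scale: by homogeneity, moving `z` by a bounded
amount is the same as moving the unit vector `z / ‖z‖` by `O(1 / ‖z‖)`, and `X` is uniformly
continuous on an annulus around the unit circle (`exists_norm_sub_le_of_homogeneous`).
An orbit segment of length `k` starting at `z` stays within `k * B` of `z`, so when `‖z‖` is large
each of its steps differs from the fixed vector `X z` by at most `m / 2`. Hence `T^[k] z - z` differs
from `k • X z` by at most `k * m / 2`, whereas `‖k • X z‖ ≥ k * m`; so `z` is not `k`-periodic.
-/

/-- A degree-zero homogeneous field, continuous off the origin, has oscillation at most `ε` on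
balls of fixed radius `D` centred far from the origin. -/
lemma exists_norm_sub_le_of_homogeneous
    (X : EuclideanSpace ℝ (Fin 2) → EuclideanSpace ℝ (Fin 2))
    (hhom : ∀ c : ℝ, 0 < c → ∀ x : EuclideanSpace ℝ (Fin 2), x ≠ 0 → X (c • x) = X x)
    (hcont : ContinuousOn X {(0 : EuclideanSpace ℝ (Fin 2))}ᶜ)
    (D : ℝ) (hD : 0 ≤ D) (ε : ℝ) (hε : 0 < ε) :
    ∃ ρ > (0 : ℝ), ∀ z w : EuclideanSpace ℝ (Fin 2), ρ < ‖z‖ → ‖w - z‖ ≤ D →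
      ‖X w - X z‖ ≤ ε := by
  set K : Set (EuclideanSpace ℝ (Fin 2)) := Metric.closedBall 0 2 \ Metric.ball 0 (1 / 2) with hK
  have hKc : IsCompact K := (isCompact_closedBall 0 2).diff Metric.isOpen_ball
  have hKs : K ⊆ {(0 : EuclideanSpace ℝ (Fin 2))}ᶜ := by
    rintro x ⟨-, hx⟩ rfl
    exact hx (Metric.mem_ball_self (by norm_num))
  obtain ⟨δ, hδ, hu⟩ := Metric.uniformContinuousOn_iff.mp
    (hKc.uniformContinuousOn_of_continuous (hcont.mono hKs)) ε hε
  refine ⟨2 * D + D / δ + 1, by positivity, fun z w hz hw => ?_⟩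
  have hDδ : 0 ≤ D / δ := by positivity
  have hz0 : 0 < ‖z‖ := by linarith
  have hwz : ‖w‖ ≤ ‖z‖ + D := by
    have := norm_sub_norm_le w z
    linarith
  have hzw : ‖z‖ - D ≤ ‖w‖ := by
    have := norm_sub_norm_le z w
    rw [norm_sub_rev] at this
    linarith
  have hmem : ∀ v : EuclideanSpace ℝ (Fin 2), ‖z‖ / 2 ≤ ‖v‖ → ‖v‖ ≤ 2 * ‖z‖ →
      ‖z‖⁻¹ • v ∈ K := by
    intro v h1 h2
    rw [hK, Set.mem_sdiff, mem_closedBall_zero_iff, mem_ball_zero_iff, norm_smul, norm_inv,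
      norm_norm, inv_mul_eq_div, not_lt, div_le_iff₀ hz0, le_div_iff₀ hz0]
    constructor <;> linarith
  have hdist : dist (‖z‖⁻¹ • w) (‖z‖⁻¹ • z) < δ := by
    rw [dist_eq_norm, ← smul_sub, norm_smul, norm_inv, norm_norm, inv_mul_eq_div, div_lt_iff₀ hz0]
    have : D / δ < ‖z‖ := by linarith
    rw [div_lt_iff₀ hδ] at this
    linarith
  have h := hu _ (hmem w (by linarith) (by linarith)) _ (hmem z (by linarith) (by linarith)) hdist
  rw [hhom _ (inv_pos.mpr hz0) w (norm_pos_iff.mp (by linarith)),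
    hhom _ (inv_pos.mpr hz0) z (norm_pos_iff.mp hz0), dist_eq_norm] at h
  exact h.le

/-- If `X` is positively homogeneous of degree zero, continuous away from the origin, and
bounded below in norm by `m > 0` away from the origin, and `T` has uniformly bounded
displacement and satisfies `‖T x - x - X x‖ ≤ C/‖x‖` far from the origin, then for every
positive integer `k` all `k`-periodic points of `T` lie in a bounded disc. -/
theorem distant_periodic_points_have_large_periods
    (X T : EuclideanSpace ℝ (Fin 2) → EuclideanSpace ℝ (Fin 2))
    (hhom : ∀ c : ℝ, 0 < c → ∀ x : EuclideanSpace ℝ (Fin 2), x ≠ 0 → X (c • x) = X x)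
    (hcont : ContinuousOn X {(0 : EuclideanSpace ℝ (Fin 2))}ᶜ)
    (m : ℝ) (hm : 0 < m)
    (hlow : ∀ x : EuclideanSpace ℝ (Fin 2), x ≠ 0 → m ≤ ‖X x‖)
    (B : ℝ) (hB : 0 ≤ B) (hbnd : ∀ x, ‖T x - x‖ ≤ B)
    (C R : ℝ) (hC : 0 ≤ C) (hR : 0 < R)
    (happ : ∀ x, R ≤ ‖x‖ → ‖T x - x - X x‖ ≤ C / ‖x‖)
    (k : ℕ) (hk : 0 < k) :
    ∃ ρ > (0 : ℝ), ∀ z : EuclideanSpace ℝ (Fin 2), T^[k] z = z → ‖z‖ ≤ ρ := by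
  have hdrift : ∀ (z : EuclideanSpace ℝ (Fin 2)) (i : ℕ), ‖T^[i] z - z‖ ≤ i * B := by
    intro z i
    induction i with
    | zero => simp
    | succ i ih =>
      rw [iterate_succ_apply']
      have := norm_sub_le_norm_sub_add_norm_sub (T (T^[i] z)) (T^[i] z) z
      have := hbnd (T^[i] z)
      push_cast
      linarith
  obtain ⟨ρ, hρ, hX⟩ := exists_norm_sub_le_of_homogeneous X hhom hcont (k * B) (by positivity)
    (m / 4) (by positivity)
  have hkB : 0 ≤ k * B := by positivity
  have hCm : 0 ≤ 4 * C / m := by positivity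
  refine ⟨ρ + R + k * B + 4 * C / m, by positivity, fun z hz => ?_⟩
  by_contra! hlarge
  have hstep : ∀ w : EuclideanSpace ℝ (Fin 2), ‖w - z‖ ≤ k * B → ‖T w - w - X z‖ ≤ m / 2 := by
    intro w hw
    have hzw := norm_sub_norm_le z w
    rw [norm_sub_rev] at hzw
    have hw0 : 0 < ‖w‖ := by linarith
    have hCw : C / ‖w‖ ≤ m / 4 := by
      have : 4 * C / m ≤ ‖w‖ := by linarith
      rw [div_le_iff₀ hm] at this
      rw [div_le_iff₀ hw0]
      linarith
    have h1 := happ w (by linarith)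
    have h2 := hX z w (by linarith) hw
    have h3 := norm_add_le (T w - w - X w) (X w - X z)
    rw [sub_add_sub_cancel] at h3
    linarith
  have hsum : ∀ i : ℕ, i ≤ k → ‖T^[i] z - z - (i : ℝ) • X z‖ ≤ i * (m / 2) := by
    intro i
    induction i with
    | zero => simp
    | succ i ih =>
      intro hi
      have hik : (i : ℝ) ≤ k := by exact_mod_cast (Nat.le_of_succ_le hi)
      have h1 := hstep (T^[i] z) ((hdrift z i).trans (by gcongr))
      have h2 := ih (Nat.le_of_succ_le hi)
      have h3 := norm_add_le (T (T^[i] z) - T^[i] z - X z) (T^[i] z - z - (i : ℝ) • X z)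
      have h4 : T (T^[i] z) - z - ((i + 1 : ℕ) : ℝ) • X z =
          (T (T^[i] z) - T^[i] z - X z) + (T^[i] z - z - (i : ℝ) • X z) := by
        push_cast
        module
      rw [iterate_succ_apply', h4]
      push_cast
      linarith
  have hfin := hsum k le_rfl
  have hk' : (0 : ℝ) < k := by exact_mod_cast hk
  rw [hz, sub_self, zero_sub, norm_neg, norm_smul, Real.norm_natCast] at hfin
  have h1 := le_of_mul_le_mul_left hfin hk'
  have h2 := hlow z (norm_pos_iff.mp (by linarith))
  linarith
end

section
/- Let θ, a, b : ℝ → ℝ be functions and let s, k ∈ ℝ. Assume θ has derivative k at s, a has derivative cos(θ(s)) at s, b has derivative sin(θ(s)) at s, and sin(θ(s)) ≠ 0. Define λ(x) = −b(x)/sin(θ(x)) and H(x) = a(x) + λ(x)·(1 + cos(θ(x))). Then H has derivative −λ(s)·k·(1 + cos(θ(s)))/sin(θ(s)) − 1 at s; equivalently, writing φ = θ(s), H′(s) = −λ(s)·k·cot(φ/2) − 1. -/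
open Real

/-- The derivative of the generating function of the outer length billiard:
with `λ(x) = -b(x)/sin(θ(x))` (the length `|Ax|` of the tangent segment) and
`H(x) = a(x) + λ(x)·(1 + cos(θ(x)))` (the sum `|xA| + |Ax'|`), one has
`H′(s) = -λ(s)·k·(1 + cos θ(s))/sin θ(s) - 1 = -λ(s)·k·cot(θ(s)/2) - 1`. -/
theorem deriv_generating_function
    (θ a b : ℝ → ℝ) (s k : ℝ)
    (hθ : HasDerivAt θ k s)
    (ha : HasDerivAt a (Real.cos (θ s)) s)
    (hb : HasDerivAt b (Real.sin (θ s)) s)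
    (hs : Real.sin (θ s) ≠ 0) :
    HasDerivAt (fun x => a x + (-b x / Real.sin (θ x)) * (1 + Real.cos (θ x)))
      (-(-b s / Real.sin (θ s)) * k * (1 + Real.cos (θ s)) / Real.sin (θ s) - 1) s := by
  have h := ha.add (((hb.neg.div hθ.sin hs)).mul (hθ.cos.const_add 1))
  refine h.congr_deriv ?_
  simp only [Pi.neg_apply, Pi.div_apply]
  -- The `k`-terms combine through `cos θ * (1 + cos θ) + sin θ ^ 2 = 1 + cos θ`.
  have hsq := Real.sin_sq_add_cos_sq (θ s)
  field_simp
  linear_combination (b s * k) * hsq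
end

section
/- Let m > 0 and let θ : ℝ → ℝ be differentiable with θ′(s) ≥ m for all s. Let γ : ℝ → ℝ² be a curve with derivative γ′(s) = (cos θ(s), sin θ(s)) for all s (so γ is parametrized by arc length with curvature θ′ ≥ m). Let s₁ < s₂ be parameters with θ(s₂) − θ(s₁) < π/2, and suppose a point X ∈ ℝ² satisfies X = γ(s₁) + t·(cos θ(s₁), sin θ(s₁)) for some t > 0 and X = γ(s₂) − u·(cos θ(s₂), sin θ(s₂)) for some u > 0. Then ‖X − γ(s₁)‖ ≤ (θ(s₂) − θ(s₁))/m. -/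
open Real

/-!
Write `e₁`, `e₂` for the unit tangents at `s₁`, `s₂`, and `Δ = θ s₂ - θ s₁`. The two expressions
for `X` give `γ s₂ - γ s₁ = t e₁ + u e₂`. Projecting to `e₁`, `t + u cos Δ` is the growth of
`⟪γ, e₁⟫` over `[s₁, s₂]`; as `⟪γ′, e₁⟫ ≤ 1 ≤ θ′ / m`, this growth is at most `Δ / m`. Since
`0 < Δ < π / 2`, the term `u cos Δ` is positive, so `t = ‖X - γ s₁‖ ≤ Δ / m`.
-/

/-- If `γ` is an arc-length-parametrized curve with tangent direction `(cos θ, sin θ)` and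
curvature `θ′ ≥ m > 0`, and a point `X` is both on the forward tangent ray at `γ(s₁)` and
on the backward tangent ray at `γ(s₂)`, with total turning `θ(s₂) - θ(s₁) < π/2`, then the
tangent segment from `γ(s₁)` to `X` has length at most `(θ(s₂) - θ(s₁))/m`. -/
theorem tangent_segment_length_le
    (m : ℝ) (hm : 0 < m) (θ : ℝ → ℝ) (hθ : Differentiable ℝ θ)
    (hθ' : ∀ s, m ≤ deriv θ s)
    (γ : ℝ → EuclideanSpace ℝ (Fin 2))
    (hγ : ∀ s, HasDerivAt γ
      ((EuclideanSpace.equiv (Fin 2) ℝ).symm ![Real.cos (θ s), Real.sin (θ s)]) s)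
    (s₁ s₂ : ℝ) (hs : s₁ < s₂) (hang : θ s₂ - θ s₁ < π / 2)
    (X : EuclideanSpace ℝ (Fin 2)) (t u : ℝ) (ht : 0 < t) (hu : 0 < u)
    (hX1 : X = γ s₁ +
      t • (EuclideanSpace.equiv (Fin 2) ℝ).symm ![Real.cos (θ s₁), Real.sin (θ s₁)])
    (hX2 : X = γ s₂ -
      u • (EuclideanSpace.equiv (Fin 2) ℝ).symm ![Real.cos (θ s₂), Real.sin (θ s₂)]) :
    ‖X - γ s₁‖ ≤ (θ s₂ - θ s₁) / m := by
  have hmono : StrictMono θ := strictMono_of_deriv_pos fun s => hm.trans_le (hθ' s)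
  have hlt : θ s₁ < θ s₂ := hmono hs
  have hcos : 0 < Real.cos (θ s₂ - θ s₁) :=
    Real.cos_pos_of_mem_Ioo ⟨by linarith [Real.pi_pos], hang⟩
  have hγ0 : ∀ s, HasDerivAt (fun s => γ s 0) (Real.cos (θ s)) s := fun s => by
    simpa [Function.comp_def] using
      (EuclideanSpace.proj 0 : EuclideanSpace ℝ (Fin 2) →L[ℝ] ℝ).hasFDerivAt.comp_hasDerivAt s (hγ s)
  have hγ1 : ∀ s, HasDerivAt (fun s => γ s 1) (Real.sin (θ s)) s := fun s => by
    simpa [Function.comp_def] using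
      (EuclideanSpace.proj 1 : EuclideanSpace ℝ (Fin 2) →L[ℝ] ℝ).hasFDerivAt.comp_hasDerivAt s (hγ s)
  -- `m` times the projection of `γ` to the tangent direction at `s₁` grows at rate at most
  -- `m ≤ θ′`, so its difference with `θ` is monotone.
  have hder : ∀ s, HasDerivAt
      (fun s => θ s - m * (Real.cos (θ s₁) * γ s 0 + Real.sin (θ s₁) * γ s 1))
      (deriv θ s - m * (Real.cos (θ s₁) * Real.cos (θ s) +
        Real.sin (θ s₁) * Real.sin (θ s))) s := fun s =>
    (hθ s).hasDerivAt.sub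
      ((((hγ0 s).const_mul _).add ((hγ1 s).const_mul _)).const_mul m)
  have hmon := monotone_of_deriv_nonneg (fun s => (hder s).differentiableAt) (fun s => by
    rw [(hder s).deriv, ← Real.cos_sub]
    nlinarith [Real.cos_le_one (θ s₁ - θ s), hθ' s])
  have hle := hmon hs.le
  have e0 := congrArg (fun v : EuclideanSpace ℝ (Fin 2) => v 0) (hX1.symm.trans hX2)
  have e1 := congrArg (fun v : EuclideanSpace ℝ (Fin 2) => v 1) (hX1.symm.trans hX2)
  simp at e0 e1
  have hnorm : ‖X - γ s₁‖ = t := by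
    rw [hX1, add_sub_cancel_left, norm_smul, EuclideanSpace.norm_eq]
    simp [abs_of_pos ht]
  rw [Real.cos_sub] at hcos
  have hproj : (Real.cos (θ s₁) * γ s₂ 0 + Real.sin (θ s₁) * γ s₂ 1) -
      (Real.cos (θ s₁) * γ s₁ 0 + Real.sin (θ s₁) * γ s₁ 1) =
      t + u * (Real.cos (θ s₂) * Real.cos (θ s₁) + Real.sin (θ s₂) * Real.sin (θ s₁)) := by
    linear_combination -Real.cos (θ s₁) * e0 - Real.sin (θ s₁) * e1 +
      t * Real.cos_sq_add_sin_sq (θ s₁)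
  rw [hnorm, le_div_iff₀ hm]
  have hpos := mul_pos hm (mul_pos hu hcos)
  simp only at hle
  linear_combination hle - m * hproj + hpos.le
end

section
/- Let a, b, c, d, y, z, w be points of the Euclidean plane and let C ≥ 0. Assume: dist(a,b) ≤ C and dist(c,d) ≤ C; dist(y,a) + dist(y,c) = dist(z,a) + dist(z,c); dist(y,b) + dist(y,d) = dist(w,b) + dist(w,d); dist(z,a) ≤ dist(w,a); and dist(z,w) = dist(w,c) − dist(z,c). Then dist(z,w) ≤ 4C. -/
/-- The metric core of the two-ellipse comparison lemma: if `y, z` lie on a common ellipse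
with foci `a, c`, and `y, w` lie on a common ellipse with foci `b, d`, the foci pairs are
`C`-close, `dist z a ≤ dist w a`, and `z` lies between `y` and `w` on the ray through `c`
(so that `dist z w = dist w c - dist z c`), then `dist z w ≤ 4C`. -/
theorem two_ellipses_estimate
    (a b c d y z w : EuclideanSpace ℝ (Fin 2)) (C : ℝ) (hC : 0 ≤ C)
    (hab : dist a b ≤ C) (hcd : dist c d ≤ C)
    (hyz : dist y a + dist y c = dist z a + dist z c)
    (hyw : dist y b + dist y d = dist w b + dist w d)
    (hza : dist z a ≤ dist w a)
    (hzw : dist z w = dist w c - dist z c) :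
    dist z w ≤ 4 * C := by
  -- Since `dist z a ≤ dist w a`, `dist z w` is at most the `(a, c)`-focal sum at `w` minus that
  -- at `z`, i.e. minus that at `y`. Replacing `(a, c)` by `(b, d)` costs `2C` at each of `w` and
  -- `y`, and the `(b, d)`-focal sums of `w` and `y` agree.
  have hwa : dist w a ≤ dist w b + dist a b := dist_triangle_right w a b
  have hwc : dist w c ≤ dist w d + dist c d := dist_triangle_right w c d
  have hyb : dist y b ≤ dist y a + dist a b := dist_triangle y a b
  have hyd : dist y d ≤ dist y c + dist c d := dist_triangle y c d
  linarith
end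

section
/- Let Y : ℝ² → ℝ² be positively homogeneous of degree zero (Y(c·x) = Y(x) for all real c > 0 and all x ≠ 0) and continuously differentiable on ℝ² ∖ {0}, and let φ be a global flow of Y on ℝ² ∖ {0}: φ(0, x) = x for all x ≠ 0, and for every x ≠ 0 the curve t ↦ φ(t, x) avoids 0 and satisfies d/dt φ(t, x) = Y(φ(t, x)) for all t ∈ ℝ. Then there exist constants C ≥ 0 and δ > 0 such that for every x with ‖x‖ ≥ 1/δ one has ‖φ(1, x) − x − Y(x)‖ ≤ C/‖x‖. -/
/-!
By degree-zero homogeneity, `Y` is bounded by its maximum `M` on the unit circle, so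
`‖φ(t, x) - x‖ ≤ M` for `0 ≤ t ≤ 1`. Compactness of the annulus `1/2 ≤ ‖z‖ ≤ 3/2` bounds `DY` there
by some `L`, and rescaling to the unit circle gives `‖Y y - Y x‖ ≤ L ‖y - x‖ / ‖x‖` whenever
`‖y - x‖ ≤ ‖x‖ / 2` (`exists_lipschitz_of_homogeneous_zero`). For `‖x‖ ≥ 2 M` the orbit up to time 1
stays in that range, so the derivative `Y (φ(t, x)) - Y x` of `t ↦ φ(t, x) - t • Y x` is at most
`L M / ‖x‖`, and the mean value inequality on `[0, 1]` concludes.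
-/

theorem exists_bound_of_homogeneous_zero
    {Y : EuclideanSpace ℝ (Fin 2) → EuclideanSpace ℝ (Fin 2)}
    (hhom : ∀ c : ℝ, 0 < c → ∀ x : EuclideanSpace ℝ (Fin 2), x ≠ 0 → Y (c • x) = Y x)
    (hC1 : ContDiffOn ℝ 1 Y {(0 : EuclideanSpace ℝ (Fin 2))}ᶜ) :
    ∃ M ≥ (0 : ℝ), ∀ x ≠ 0, ‖Y x‖ ≤ M := by
  obtain ⟨M, hM⟩ := (isCompact_sphere (0 : EuclideanSpace ℝ (Fin 2)) 1).exists_bound_of_continuousOn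
    (hC1.continuousOn.mono fun z hz => by
      simpa using Metric.ne_of_mem_sphere hz one_ne_zero)
  refine ⟨max M 0, le_max_right _ _, fun x hx => ?_⟩
  have hpos : 0 < ‖x‖ := norm_pos_iff.2 hx
  rw [← hhom ‖x‖⁻¹ (inv_pos.2 hpos) x hx]
  exact (hM _ (by simp [norm_smul, hpos.ne'])).trans (le_max_left _ _)

/-- The Lipschitz constant of `Y` near `x` decays like `1 / ‖x‖`. -/
theorem exists_lipschitz_of_homogeneous_zero
    {Y : EuclideanSpace ℝ (Fin 2) → EuclideanSpace ℝ (Fin 2)}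
    (hhom : ∀ c : ℝ, 0 < c → ∀ x : EuclideanSpace ℝ (Fin 2), x ≠ 0 → Y (c • x) = Y x)
    (hC1 : ContDiffOn ℝ 1 Y {(0 : EuclideanSpace ℝ (Fin 2))}ᶜ) :
    ∃ L ≥ (0 : ℝ), ∀ x y : EuclideanSpace ℝ (Fin 2), x ≠ 0 → ‖y - x‖ ≤ ‖x‖ / 2 →
      ‖Y y - Y x‖ ≤ L * (‖y - x‖ / ‖x‖) := by
  have hopen : IsOpen ({0}ᶜ : Set (EuclideanSpace ℝ (Fin 2))) := isOpen_compl_singleton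
  have hcompact : IsCompact
      (Metric.closedBall (0 : EuclideanSpace ℝ (Fin 2)) (3 / 2) \ Metric.ball 0 (1 / 2)) :=
    (isCompact_closedBall _ _).diff Metric.isOpen_ball
  obtain ⟨L, hL⟩ := hcompact.exists_bound_of_continuousOn
    ((hC1.continuousOn_fderiv_of_isOpen hopen le_rfl).mono fun z hz => by
      rintro rfl
      exact hz.2 (by simp))
  refine ⟨max L 0, le_max_right _ _, fun x y hx hxy => ?_⟩
  have hpos : 0 < ‖x‖ := norm_pos_iff.2 hx
  have hinv : 0 < ‖x‖⁻¹ := inv_pos.2 hpos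
  have hy : y ≠ 0 := by
    rintro rfl
    rw [zero_sub, norm_neg] at hxy
    linarith
  have hu : ‖‖x‖⁻¹ • x‖ = 1 := by simp [norm_smul, hpos.ne']
  have hdist : ‖‖x‖⁻¹ • y - ‖x‖⁻¹ • x‖ = ‖y - x‖ / ‖x‖ := by
    rw [← smul_sub, norm_smul, Real.norm_of_nonneg hinv.le, div_eq_inv_mul]
  have hbounds : ∀ z ∈ Metric.closedBall (‖x‖⁻¹ • x) (1 / 2), 1 / 2 ≤ ‖z‖ ∧ ‖z‖ ≤ 3 / 2 := by
    intro z hz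
    rw [mem_closedBall_iff_norm] at hz
    have h1 := norm_sub_norm_le z (‖x‖⁻¹ • x)
    have h2 := norm_sub_norm_le (‖x‖⁻¹ • x) z
    rw [norm_sub_rev] at h2
    constructor <;> linarith
  rw [← hhom _ hinv x hx, ← hhom _ hinv y hy, ← hdist]
  refine (convex_closedBall (‖x‖⁻¹ • x) (1 / 2)).norm_image_sub_le_of_norm_fderiv_le
    (𝕜 := ℝ) (fun z hz => ?_) (fun z hz => ?_) (by simp) ?_
  · have hz0 : z ≠ 0 := norm_pos_iff.1 (by linarith [(hbounds z hz).1])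
    exact (hC1.differentiableOn one_ne_zero).differentiableAt (hopen.mem_nhds hz0)
  · refine (hL z ⟨?_, ?_⟩).trans (le_max_left _ _)
    · simpa using (hbounds z hz).2
    · simpa using (hbounds z hz).1
  · rw [mem_closedBall_iff_norm, hdist, div_le_iff₀ hpos]
    linarith

/-- The time-1 flow map of a `C¹`, positively homogeneous of degree zero vector field `Y`
on `ℝ² ∖ {0}` displaces a distant point `x` by `Y(x)` up to an error of order `1/‖x‖`:
there exist `C ≥ 0` and `δ > 0` with `‖φ(1, x) - x - Y(x)‖ ≤ C/‖x‖` whenever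
`‖x‖ ≥ 1/δ`. -/
theorem time_one_flow_displacement_estimate
    (Y : EuclideanSpace ℝ (Fin 2) → EuclideanSpace ℝ (Fin 2))
    (hhom : ∀ c : ℝ, 0 < c → ∀ x : EuclideanSpace ℝ (Fin 2), x ≠ 0 → Y (c • x) = Y x)
    (hC1 : ContDiffOn ℝ 1 Y {(0 : EuclideanSpace ℝ (Fin 2))}ᶜ)
    (φ : ℝ → EuclideanSpace ℝ (Fin 2) → EuclideanSpace ℝ (Fin 2))
    (hφ0 : ∀ x : EuclideanSpace ℝ (Fin 2), x ≠ 0 → φ 0 x = x)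
    (hne : ∀ x : EuclideanSpace ℝ (Fin 2), x ≠ 0 → ∀ t : ℝ, φ t x ≠ 0)
    (hderiv : ∀ x : EuclideanSpace ℝ (Fin 2), x ≠ 0 → ∀ t : ℝ,
      HasDerivAt (fun s => φ s x) (Y (φ t x)) t) :
    ∃ C ≥ (0 : ℝ), ∃ δ > (0 : ℝ), ∀ x : EuclideanSpace ℝ (Fin 2), 1 / δ ≤ ‖x‖ →
      ‖φ 1 x - x - Y x‖ ≤ C / ‖x‖ := by
  obtain ⟨M, hM0, hM⟩ := exists_bound_of_homogeneous_zero hhom hC1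
  obtain ⟨L, hL0, hL⟩ := exists_lipschitz_of_homogeneous_zero hhom hC1
  refine ⟨L * M, by positivity, 1 / (2 * M + 1), by positivity, fun x hx => ?_⟩
  rw [one_div_one_div] at hx
  have hpos : 0 < ‖x‖ := by linarith
  have hx0 : x ≠ 0 := norm_pos_iff.1 hpos
  have hnear : ∀ t ∈ Set.Icc (0 : ℝ) 1, ‖φ t x - x‖ ≤ M := by
    intro t ht
    have h := norm_image_sub_le_of_norm_deriv_le_segment' (f := fun s => φ s x) (C := M)
      (fun s _ => (hderiv x hx0 s).hasDerivWithinAt) (fun s _ => hM _ (hne x hx0 s)) t ht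
    simp only [hφ0 x hx0, sub_zero] at h
    exact h.trans (mul_le_of_le_one_right hM0 ht.2)
  have h := norm_image_sub_le_of_norm_deriv_le_segment_01' (f := fun s => φ s x - s • Y x)
    (f' := fun s => Y (φ s x) - Y x) (C := L * M / ‖x‖)
    (fun s _ => by
      simpa using ((hderiv x hx0 s).fun_sub ((hasDerivAt_id s).smul_const (Y x))).hasDerivWithinAt)
    (fun s hs => by
      have hs' := hnear s (Set.Ico_subset_Icc_self hs)
      refine (hL x (φ s x) hx0 (by linarith)).trans ?_
      rw [mul_div_assoc]
      gcongr)
  simpa [hφ0 x hx0, sub_right_comm] using h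
end
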